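/- arXiv:math/0606451 — 2 statements merged into one kernel-verified Lean document; each statement's English description precedes it below -/
import Mathlib

section
/- Let t, q, s be positive integers with q ≥ s ≥ t, and let m = gcd(t,q)/gcd(t,q,s) (where gcd(t,q,s) = gcd(gcd(t,q),s)). Then there exists a 2-coloring χ : {1, …, t(t+q)(t+s)+ms−1} → {0,1} admitting no solution x, y, z in {1,…,t(t+q)(t+s)+ms−1} to tx + qy = z with χ(x) = χ(y) = χ(z) = 0 and no solution x, y, z to tx + sy = z with χ(x) = χ(y) = χ(z) = 1. Consequently RR_t(q,s) ≥ t(t+q)(t+s) + ms. -/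
/-!
Let `d = gcd(t, q)` and `v = (t + q)(t + s)`. Give color 1 to the integers below `t + s` and to the
multiples of `d` from `v` on, and color 0 to all others. If `x` and `y` have color 0, they are at
least `t + s`, so `tx + qy` is a multiple of `d` and at least `v`, hence has color 1.
If `x`, `y` and `z = tx + sy` have color 1, then `z ≥ t + s` forces `z` to be a multiple of `d` with
`z ≥ v`, so `x` and `y` cannot both be below `t + s`. Moreover `d ∣ sy`, which makes `y` a multiple
of `m`. Thus `z ≥ tv + ms` if `x ≥ v`, and `z ≥ sv + t ≥ tv + ms` if `y ≥ v`; the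
last inequality holds because `m = 1` when `s = t`, and `v ≥ ms` when `s > t`.
-/

/-- The equation `a * x + b * y = z` has a solution in `{1, …, N}` all of whose entries have
color `c` under `χ`. The coloring is defined on all of `ℕ`, but only its values on `{1, …, N}`
matter. -/
def HasMonochromaticSolution {κ : Type*} (a b N : ℕ) (χ : ℕ → κ) (c : κ) : Prop :=
  ∃ x y z : ℕ, x ∈ Finset.Icc 1 N ∧ y ∈ Finset.Icc 1 N ∧ z ∈ Finset.Icc 1 N ∧
    a * x + b * y = z ∧ χ x = c ∧ χ y = c ∧ χ z = c

theorem HasMonochromaticSolution.mono {κ : Type*} {a b M N : ℕ} {χ : ℕ → κ} {c : κ}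
    (hMN : M ≤ N) (h : HasMonochromaticSolution a b M χ c) :
    HasMonochromaticSolution a b N χ c := by
  obtain ⟨x, y, z, hx, hy, hz, hsol⟩ := h
  have hsub : Finset.Icc 1 M ⊆ Finset.Icc 1 N := Finset.Icc_subset_Icc_right hMN
  exact ⟨x, y, z, hsub hx, hsub hy, hsub hz, hsol⟩

theorem HasMonochromaticSolution.lt_of_not {κ : Type*} {a b M N : ℕ} {χ : ℕ → κ} {c : κ}
    (hM : HasMonochromaticSolution a b M χ c) (hN : ¬ HasMonochromaticSolution a b N χ c) :
    N < M :=
  lt_of_not_ge fun hMN ↦ hN (hM.mono hMN)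

theorem div_gcd_dvd_of_dvd_mul {d b y : ℕ} (hd : 0 < d) (h : d ∣ b * y) : d / d.gcd b ∣ y :=
  (Nat.div_dvd_iff_dvd_mul (Nat.gcd_dvd_left d b) (Nat.gcd_pos_of_pos_left b hd)).mpr
    (dvd_gcd_mul_of_dvd_mul h)

/-- The coloring in which the integers below `u` and the multiples of `d` from `v` on have color 1,
and all others have color 0. -/
def thresholdColoring (u v d n : ℕ) : Fin 2 :=
  if n < u ∨ v ≤ n ∧ d ∣ n then 1 else 0

section thresholdColoring

variable {u v d n a b N : ℕ}

theorem thresholdColoring_eq_one_iff :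
    thresholdColoring u v d n = 1 ↔ n < u ∨ v ≤ n ∧ d ∣ n := by
  simp [thresholdColoring, or_iff_not_imp_left]

theorem thresholdColoring_eq_zero_iff :
    thresholdColoring u v d n = 0 ↔ u ≤ n ∧ (v ≤ n → ¬ d ∣ n) := by
  simp [thresholdColoring]

theorem not_hasMonochromaticSolution_thresholdColoring_zero
    (hda : d ∣ a) (hdb : d ∣ b) (hv : v ≤ (a + b) * u) :
    ¬ HasMonochromaticSolution a b N (thresholdColoring u v d) 0 := by
  rintro ⟨x, y, z, -, -, -, rfl, hx, hy, hz⟩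
  rw [thresholdColoring_eq_zero_iff] at hx hy hz
  have hvz : v ≤ a * x + b * y :=
    calc v ≤ (a + b) * u := hv
      _ = a * u + b * u := add_mul a b u
      _ ≤ a * x + b * y := by gcongr <;> [exact hx.1; exact hy.1]
  exact hz.2 hvz (dvd_add (hda.mul_right x) (hdb.mul_right y))

theorem not_hasMonochromaticSolution_thresholdColoring_one
    (hda : d ∣ a) (hu : u ≤ a + b) (huv : (a + b) * u ≤ v)
    (hN_left : N < a * v + b * (d / d.gcd b)) (hN_right : N < a + b * v) :
    ¬ HasMonochromaticSolution a b N (thresholdColoring u v d) 1 := by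
  rintro ⟨x, y, z, hx_mem, hy_mem, hz_mem, rfl, hx, hy, hz⟩
  rw [Finset.mem_Icc] at hx_mem hy_mem hz_mem
  rw [thresholdColoring_eq_one_iff] at hx hy hz
  have huz : u ≤ a * x + b * y :=
    hu.trans (add_le_add (Nat.le_mul_of_pos_right a hx_mem.1) (Nat.le_mul_of_pos_right b hy_mem.1))
  obtain ⟨hvz, hdz⟩ := hz.resolve_left huz.not_gt
  rcases hx with hxu | ⟨hvx, -⟩
  · rcases hy with hyu | ⟨hvy, -⟩
    · have hzv : a * x + b * y < v :=
        calc a * x + b * y < a * (x + 1) + b * (y + 1) := by linarith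
          _ ≤ a * u + b * u := by gcongr <;> [exact hxu; exact hyu]
          _ = (a + b) * u := (add_mul a b u).symm
          _ ≤ v := huv
      exact hzv.not_ge hvz
    · have hz_large : a + b * v ≤ a * x + b * y :=
        add_le_add (Nat.le_mul_of_pos_right a hx_mem.1) (Nat.mul_le_mul_left b hvy)
      omega
  · have hdy : d ∣ b * y := (Nat.dvd_add_right (hda.mul_right x)).mp hdz
    have hd : 0 < d := Nat.pos_of_dvd_of_pos hdz hz_mem.1
    have hy_le : d / d.gcd b ≤ y := Nat.le_of_dvd hy_mem.1 (div_gcd_dvd_of_dvd_mul hd hdy)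
    have hz_large : a * v + b * (d / d.gcd b) ≤ a * x + b * y := by gcongr
    omega

end thresholdColoring

theorem mul_add_mul_div_gcd_le {t s d v : ℕ} (hts : t ≤ s) (hdt : d ∣ t)
    (hv : s * (d / d.gcd s) ≤ v) : t * v + s * (d / d.gcd s) ≤ t + s * v := by
  rcases hts.eq_or_lt with rfl | hlt
  · have hm : d / d.gcd t ≤ 1 := by
      rw [Nat.gcd_eq_left hdt]
      exact Nat.div_le_of_le_mul (mul_one d).ge
    linarith [Nat.mul_le_mul_left t hm]
  · calc t * v + s * (d / d.gcd s) ≤ t * v + v := by gcongr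
      _ = (t + 1) * v := by ring
      _ ≤ s * v := Nat.mul_le_mul_right v hlt
      _ ≤ t + s * v := Nat.le_add_left _ _

/-- Theorem 2.2: for positive integers `q ≥ s ≥ t` and
`m = gcd(t,q)/gcd(gcd(t,q),s)`, there is a 2-coloring of
`[1, t(t+q)(t+s)+ms-1]` with no solution to `tx + qy = z` monochromatic of
color 0 and no solution to `tx + sy = z` monochromatic of color 1;
consequently `RR_t(q,s) ≥ t(t+q)(t+s)+ms`. -/
theorem off_diagonal_rado_lower_bound_gcd (t q s m : ℕ)
    (ht : 0 < t) (hts : t ≤ s) (hsq : s ≤ q)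
    (hm : m = Nat.gcd t q / Nat.gcd (Nat.gcd t q) s) :
    (∃ χ : ℕ → Fin 2,
      (¬ ∃ x y z : ℕ,
        x ∈ Finset.Icc 1 (t * (t + q) * (t + s) + m * s - 1) ∧
        y ∈ Finset.Icc 1 (t * (t + q) * (t + s) + m * s - 1) ∧
        z ∈ Finset.Icc 1 (t * (t + q) * (t + s) + m * s - 1) ∧
        t * x + q * y = z ∧ χ x = 0 ∧ χ y = 0 ∧ χ z = 0) ∧
      (¬ ∃ x y z : ℕ,
        x ∈ Finset.Icc 1 (t * (t + q) * (t + s) + m * s - 1) ∧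
        y ∈ Finset.Icc 1 (t * (t + q) * (t + s) + m * s - 1) ∧
        z ∈ Finset.Icc 1 (t * (t + q) * (t + s) + m * s - 1) ∧
        t * x + s * y = z ∧ χ x = 1 ∧ χ y = 1 ∧ χ z = 1)) ∧
    (∀ M : ℕ, 0 < M →
      (∀ χ : ℕ → Fin 2,
        (∃ x y z : ℕ, x ∈ Finset.Icc 1 M ∧ y ∈ Finset.Icc 1 M ∧
          z ∈ Finset.Icc 1 M ∧ t * x + q * y = z ∧
          χ x = 0 ∧ χ y = 0 ∧ χ z = 0) ∨
        (∃ x y z : ℕ, x ∈ Finset.Icc 1 M ∧ y ∈ Finset.Icc 1 M ∧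
          z ∈ Finset.Icc 1 M ∧ t * x + s * y = z ∧
          χ x = 1 ∧ χ y = 1 ∧ χ z = 1)) →
      t * (t + q) * (t + s) + m * s ≤ M) := by
  set d := t.gcd q
  set v := (t + q) * (t + s) with hv
  have hdt : d ∣ t := Nat.gcd_dvd_left t q
  have hmt : m ≤ t := hm ▸ (Nat.div_le_self _ _).trans (Nat.le_of_dvd ht hdt)
  have hmv : s * m ≤ v := mul_comm s m ▸ Nat.mul_le_mul (by omega) (by omega)
  have hbound : t * v + s * m ≤ t + s * v := by
    subst hm
    exact mul_add_mul_div_gcd_le hts hdt hmv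
  have hN : t * (t + q) * (t + s) + m * s = t * v + s * m := by ring
  have hpos : 0 < t * v + s * m := by positivity
  rw [hN]
  have hzero : ¬ HasMonochromaticSolution t q (t * v + s * m - 1)
      (thresholdColoring (t + s) v d) 0 :=
    not_hasMonochromaticSolution_thresholdColoring_zero hdt (Nat.gcd_dvd_right t q) le_rfl
  have hone : ¬ HasMonochromaticSolution t s (t * v + s * m - 1)
      (thresholdColoring (t + s) v d) 1 :=
    not_hasMonochromaticSolution_thresholdColoring_one hdt le_rfl (by rw [hv]; gcongr)
      (by rw [← hm]; omega) (by omega)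
  refine ⟨⟨thresholdColoring (t + s) v d, hzero, hone⟩, fun M _ hforced ↦ Nat.le_of_pred_lt ?_⟩
  exact (hforced _).elim (HasMonochromaticSolution.lt_of_not · hzero)
    (HasMonochromaticSolution.lt_of_not · hone)
end

section
/- Let k, ℓ ≥ 1 and let a₁, …, a_k, b₁, …, b_ℓ be positive integers with a₁ + ⋯ + a_k ≥ b₁ + ⋯ + b_ℓ, and suppose b₁ + ⋯ + b_ℓ = 1 (so ℓ = 1 and b₁ = 1). Set Q = a₁ + ⋯ + a_k. Then the least positive integer N such that every 2-coloring χ of {1,…,N} admits either values x, y₁, …, y_k, z ∈ {1,…,N} with x + a₁y₁ + ⋯ + a_ky_k = z all colored 0, or values x, y, z ∈ {1,…,N} with x + y = z all colored 1, is N = 2Q + 2⌊(Q+1)/2⌋ + 1. -/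
/-!
Write `Q` for the sum of the coefficients. For the upper bound only the solutions with all `yᵢ`
equal matter, so the first equation becomes `x + Q y = z`. If `1` has color `0`, the numbers
`2`, `Q + 1`, `Q + 2`, `Q + 3`, `2Q + 2`, `2Q + 3` already force a contradiction. If `1` has color
`1`, then `2` has color `0`, and an induction along the odd numbers shows that those at most
`N - 2Q` all have color `1`. Two of them add up to `2Q + 2`, which has color `1` as well:
otherwise `x = y = 2`, `z = 2Q + 2` would be a solution of color `0`.

For the lower bound, give color `1` to the odd numbers up to `Q` and the even numbers from
`2Q + 2` on. An odd number of color `0` is then so large that no solution of color `0` below the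
bound involves one, while even values of color `0` yield an even `z ≥ 2Q + 2`, of color `1`.
-/

/-- The set of the numbers in `{1, …, N}` to which the coloring `χ` gives the color `c`. -/
def colorClass (χ : ℕ → Fin 2) (N : ℕ) (c : Fin 2) : Set ℕ :=
  {n | n ∈ Finset.Icc 1 N ∧ χ n = c}

/-- A set without solutions of `x + ∑ aᵢ yᵢ = z`; the variables may take equal values. -/
def SolutionFree {ι : Type*} [Fintype ι] (a : ι → ℕ) (s : Set ℕ) : Prop :=
  ∀ x ∈ s, ∀ y : ι → ℕ, (∀ i, y i ∈ s) → x + ∑ i, a i * y i ∉ s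

/-- A set without solutions of `x + y = z`, where `x = y` is allowed. -/
def SumFree (s : Set ℕ) : Prop :=
  ∀ x ∈ s, ∀ y ∈ s, x + y ∉ s

theorem exists_solution_iff_not_solutionFree {ι : Type*} [Fintype ι] (a : ι → ℕ)
    (χ : ℕ → Fin 2) (N : ℕ) (c : Fin 2) :
    (∃ (x : ℕ) (y : ι → ℕ) (z : ℕ),
      x ∈ Finset.Icc 1 N ∧ (∀ i, y i ∈ Finset.Icc 1 N) ∧ z ∈ Finset.Icc 1 N ∧
      x + ∑ i, a i * y i = z ∧ χ x = c ∧ (∀ i, χ (y i) = c) ∧ χ z = c) ↔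
    ¬ SolutionFree a (colorClass χ N c) := by
  unfold SolutionFree
  push Not
  constructor
  · rintro ⟨x, y, _, hx, hy, hz, rfl, hχx, hχy, hχz⟩
    exact ⟨x, ⟨hx, hχx⟩, y, fun i => ⟨hy i, hχy i⟩, hz, hχz⟩
  · rintro ⟨x, ⟨hx, hχx⟩, y, hy, hz, hχz⟩
    exact ⟨x, y, _, hx, fun i => (hy i).1, hz, rfl, hχx, fun i => (hy i).2, hχz⟩

theorem exists_sum_iff_not_sumFree (χ : ℕ → Fin 2) (N : ℕ) (c : Fin 2) :
    (∃ x y z : ℕ, x ∈ Finset.Icc 1 N ∧ y ∈ Finset.Icc 1 N ∧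
      z ∈ Finset.Icc 1 N ∧ x + y = z ∧ χ x = c ∧ χ y = c ∧ χ z = c) ↔
    ¬ SumFree (colorClass χ N c) := by
  unfold SumFree
  push Not
  constructor
  · rintro ⟨x, y, _, hx, hy, hz, rfl, hχx, hχy, hχz⟩
    exact ⟨x, ⟨hx, hχx⟩, y, ⟨hy, hχy⟩, hz, hχz⟩
  · rintro ⟨x, ⟨hx, hχx⟩, y, ⟨hy, hχy⟩, hz, hχz⟩
    exact ⟨x, y, _, hx, hy, hz, rfl, hχx, hχy, hχz⟩

theorem colorClass_zero_union_colorClass_one (χ : ℕ → Fin 2) (N : ℕ) :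
    colorClass χ N 0 ∪ colorClass χ N 1 = Set.Icc 1 N := by
  ext n
  have color_eq : χ n = 0 ∨ χ n = 1 := by omega
  simp only [colorClass, Set.mem_union, Set.mem_ofPred_eq, Finset.mem_Icc, Set.mem_Icc]
  tauto

theorem SolutionFree.add_sum_mul_notMem {ι : Type*} [Fintype ι] {a : ι → ℕ} {s : Set ℕ}
    (hs : SolutionFree a s) {x y : ℕ} (hx : x ∈ s) (hy : y ∈ s) :
    x + (∑ i, a i) * y ∉ s := by
  rw [Finset.sum_mul]
  exact hs x hx (fun _ => y) fun _ => hy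

/-- Two sets covering `{1, …, N}`, the first without solutions of `x + Q y = z` and the second
without solutions of `x + y = z`. The color classes of a coloring are an instance; the sets are
allowed to overlap. -/
structure AvoidingCover (Q N : ℕ) (A B : Set ℕ) : Prop where
  union_eq : A ∪ B = Set.Icc 1 N
  add_mul_notMem : ∀ ⦃x⦄, x ∈ A → ∀ ⦃y⦄, y ∈ A → x + Q * y ∉ A
  sumFree : SumFree B

namespace AvoidingCover

variable {Q N x y n : ℕ} {A B : Set ℕ}

theorem pos_of_mem_left (h : AvoidingCover Q N A B) (hn : n ∈ A) : 0 < n :=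
  (h.union_eq.subset (Or.inl hn)).1

theorem le_of_mem_left (h : AvoidingCover Q N A B) (hn : n ∈ A) : n ≤ N :=
  (h.union_eq.subset (Or.inl hn)).2

theorem pos_of_mem_right (h : AvoidingCover Q N A B) (hn : n ∈ B) : 0 < n :=
  (h.union_eq.subset (Or.inr hn)).1

theorem mem_or_mem (h : AvoidingCover Q N A B) (hpos : 0 < n) (hle : n ≤ N) : n ∈ A ∨ n ∈ B :=
  h.union_eq.superset ⟨hpos, hle⟩

theorem add_mem_left (h : AvoidingCover Q N A B) (hx : x ∈ B) (hy : y ∈ B) (hn : x + y = n)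
    (hle : n ≤ N) : n ∈ A := by
  have hpos : 0 < n := hn ▸ Nat.add_pos_left (h.pos_of_mem_right hx) y
  exact (h.mem_or_mem hpos hle).resolve_right (hn ▸ h.sumFree x hx y hy)

theorem add_mul_mem_right (h : AvoidingCover Q N A B) (hx : x ∈ A) (hy : y ∈ A)
    (hn : x + Q * y = n) (hle : n ≤ N) : n ∈ B := by
  have hpos : 0 < n := hn ▸ Nat.add_pos_left (h.pos_of_mem_left hx) (Q * y)
  exact (h.mem_or_mem hpos hle).resolve_left (hn ▸ h.add_mul_notMem hx hy)

theorem mem_right_of_add_mul_mem_left (h : AvoidingCover Q N A B) (hpos : 0 < x) (hy : y ∈ A)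
    (hn : x + Q * y = n) (hmem : n ∈ A) : x ∈ B := by
  have hle : n ≤ N := h.le_of_mem_left hmem
  exact (h.mem_or_mem hpos (by omega)).resolve_left fun hx =>
    h.add_mul_notMem hx hy (hn ▸ hmem)

theorem one_notMem_left (h : AvoidingCover Q N A B) (hN : 2 * Q + 3 ≤ N) : 1 ∉ A := by
  intro one_mem
  have Q_add_one_mem : Q + 1 ∈ B := h.add_mul_mem_right one_mem one_mem (by omega) (by omega)
  have two_Q_add_two_mem : 2 * Q + 2 ∈ A :=
    h.add_mem_left Q_add_one_mem Q_add_one_mem (by omega) (by omega)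
  have Q_add_two_mem : Q + 2 ∈ B :=
    h.mem_right_of_add_mul_mem_left (by omega) one_mem (by omega) two_Q_add_two_mem
  have two_mem : 2 ∈ B := (h.mem_or_mem two_pos (by omega)).resolve_left fun two_mem_left =>
    h.add_mul_notMem two_mem_left two_mem_left (by convert two_Q_add_two_mem using 1; ring)
  have two_Q_add_three_mem : 2 * Q + 3 ∈ A :=
    h.add_mem_left Q_add_one_mem Q_add_two_mem (by omega) (by omega)
  have Q_add_three_mem : Q + 3 ∈ A :=
    h.add_mem_left Q_add_one_mem two_mem (by omega) (by omega)
  exact h.add_mul_notMem Q_add_three_mem one_mem (by convert two_Q_add_three_mem using 1; ring)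

theorem two_mul_add_one_mem_right (h : AvoidingCover Q N A B) (one_mem : 1 ∈ B) (j : ℕ)
    (hle : 2 * j + 1 + 2 * Q ≤ N) : 2 * j + 1 ∈ B := by
  induction j with
  | zero => exact one_mem
  | succ j ih =>
    have two_mem : 2 ∈ A := h.add_mem_left one_mem one_mem (by omega) (by omega)
    have even_mem : 2 * j + 2 ∈ A :=
      h.add_mem_left (ih (by omega)) one_mem (by omega) (by omega)
    have even_shift_mem : 2 * j + 2 + 2 * Q ∈ B :=
      h.add_mul_mem_right even_mem two_mem (by omega) (by omega)
    have odd_shift_mem : 2 * (j + 1) + 1 + 2 * Q ∈ A :=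
      h.add_mem_left even_shift_mem one_mem (by omega) hle
    exact h.mem_right_of_add_mul_mem_left (by omega) two_mem (by omega) odd_shift_mem

theorem lt (h : AvoidingCover Q N A B) (hQ : 0 < Q) : N < 2 * Q + 2 * ((Q + 1) / 2) + 1 := by
  by_contra! hle
  have one_mem : 1 ∈ B :=
    (h.mem_or_mem one_pos (by omega)).resolve_left (h.one_notMem_left (by omega))
  have two_mem : 2 ∈ A := h.add_mem_left one_mem one_mem (by omega) (by omega)
  have two_Q_add_two_mem : 2 * Q + 2 ∈ B :=
    h.add_mul_mem_right two_mem two_mem (by omega) (by omega)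
  have floor_mem : 2 * (Q / 2) + 1 ∈ B := h.two_mul_add_one_mem_right one_mem _ (by omega)
  have ceil_mem : 2 * ((Q + 1) / 2) + 1 ∈ B := h.two_mul_add_one_mem_right one_mem _ (by omega)
  have sum_eq : 2 * (Q / 2) + 1 + (2 * ((Q + 1) / 2) + 1) = 2 * Q + 2 := by omega
  exact h.sumFree _ floor_mem _ ceil_mem (sum_eq ▸ two_Q_add_two_mem)

end AvoidingCover

theorem lt_of_solutionFree_of_sumFree {ι : Type*} [Fintype ι] {a : ι → ℕ} {χ : ℕ → Fin 2} {N : ℕ}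
    (ha : 0 < ∑ i, a i) (hzero : SolutionFree a (colorClass χ N 0))
    (hone : SumFree (colorClass χ N 1)) :
    N < 2 * (∑ i, a i) + 2 * (((∑ i, a i) + 1) / 2) + 1 :=
  AvoidingCover.lt
    { union_eq := colorClass_zero_union_colorClass_one χ N
      add_mul_notMem := fun _ hx _ hy => hzero.add_sum_mul_notMem hx hy
      sumFree := hone } ha

/-- The coloring showing that the upper bound is attained: color `1` goes to the odd numbers up to
`Q` and to the even numbers from `2 * Q + 2` on. -/
def extremalColoring (Q n : ℕ) : Fin 2 :=
  if n % 2 = 1 ∧ n ≤ Q ∨ n % 2 = 0 ∧ 2 * Q + 2 ≤ n then 1 else 0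

theorem extremalColoring_eq_one_iff {Q n : ℕ} :
    extremalColoring Q n = 1 ↔ n % 2 = 1 ∧ n ≤ Q ∨ n % 2 = 0 ∧ 2 * Q + 2 ≤ n := by
  unfold extremalColoring
  split_ifs with hcond <;> simp [hcond]

theorem extremalColoring_eq_zero_iff {Q n : ℕ} :
    extremalColoring Q n = 0 ↔ ¬ (n % 2 = 1 ∧ n ≤ Q ∨ n % 2 = 0 ∧ 2 * Q + 2 ≤ n) := by
  unfold extremalColoring
  split_ifs with hcond <;> simp [hcond]

theorem two_le_of_extremalColoring_eq_zero {Q n : ℕ} (hQ : 0 < Q) (hn : 0 < n)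
    (hχ : extremalColoring Q n = 0) : 2 ≤ n := by
  rw [extremalColoring_eq_zero_iff] at hχ
  omega

theorem lt_of_odd_of_extremalColoring_eq_zero {Q n : ℕ} (hodd : Odd n)
    (hχ : extremalColoring Q n = 0) : 2 * ((Q + 1) / 2) < n := by
  rw [extremalColoring_eq_zero_iff] at hχ
  rw [Nat.odd_iff] at hodd
  omega

theorem extremalColoring_eq_one_of_even {Q n : ℕ} (heven : Even n) (hle : 2 * Q + 2 ≤ n) :
    extremalColoring Q n = 1 :=
  extremalColoring_eq_one_iff.2 (Or.inr ⟨Nat.even_iff.1 heven, hle⟩)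

theorem sumFree_colorClass_extremalColoring {Q N : ℕ} (hN : N ≤ 2 * Q + 2 * ((Q + 1) / 2)) :
    SumFree (colorClass (extremalColoring Q) N 1) := by
  rintro x ⟨-, hχx⟩ y ⟨-, hχy⟩ ⟨hxy, hχxy⟩
  rw [extremalColoring_eq_one_iff] at hχx hχy hχxy
  rw [Finset.mem_Icc] at hxy
  omega

theorem mul_sum_add_le_sum_mul_add {ι : Type*} [Fintype ι] {a y : ι → ℕ} {c : ℕ}
    (hy : ∀ i, c ≤ y i) {j : ι} (hj : 0 < a j) :
    c * ∑ i, a i + y j ≤ ∑ i, a i * y i + c := by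
  obtain ⟨d, rfl⟩ : ∃ d : ι → ℕ, y = fun i => c + d i :=
    ⟨fun i => y i - c, funext fun i => (Nat.add_sub_cancel' (hy i)).symm⟩
  have excess_le : d j ≤ ∑ i, a i * d i :=
    (Nat.le_mul_of_pos_left _ hj).trans
      (Finset.single_le_sum (f := fun i => a i * d i) (fun _ _ => Nat.zero_le _)
        (Finset.mem_univ j))
  calc c * ∑ i, a i + (c + d j)
      ≤ c * ∑ i, a i + (c + ∑ i, a i * d i) := by gcongr
    _ = ∑ i, a i * (c + d i) + c := by
      simp only [mul_add, Finset.sum_add_distrib, ← Finset.sum_mul]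
      ring

theorem solutionFree_colorClass_extremalColoring {ι : Type*} [Fintype ι] {a : ι → ℕ} {N : ℕ}
    (ha : 0 < ∑ i, a i) (hN : N ≤ 2 * (∑ i, a i) + 2 * (((∑ i, a i) + 1) / 2)) :
    SolutionFree a (colorClass (extremalColoring (∑ i, a i)) N 0) := by
  rintro x ⟨hx, hχx⟩ y hy ⟨hz, hχz⟩
  rw [Finset.mem_Icc] at hx hz
  have two_le_x : 2 ≤ x := two_le_of_extremalColoring_eq_zero ha hx.1 hχx
  have two_le_y (i : ι) : 2 ≤ y i :=
    two_le_of_extremalColoring_eq_zero ha (Finset.mem_Icc.1 (hy i).1).1 (hy i).2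
  have two_mul_le : 2 * ∑ i, a i ≤ ∑ i, a i * y i := by
    rw [mul_comm, Finset.sum_mul]
    gcongr with i
    exact two_le_y i
  have even_x : Even x := by
    by_contra hodd
    have := lt_of_odd_of_extremalColoring_eq_zero (Nat.not_even_iff_odd.1 hodd) hχx
    omega
  have even_term (i : ι) : Even (a i * y i) := by
    rcases (a i).eq_zero_or_pos with hzero | hpos
    · simp [hzero]
    · refine Even.mul_left ?_ _
      by_contra hodd
      have := lt_of_odd_of_extremalColoring_eq_zero (Nat.not_even_iff_odd.1 hodd) (hy i).2
      have := mul_sum_add_le_sum_mul_add two_le_y hpos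
      omega
  have even_z : Even (x + ∑ i, a i * y i) :=
    even_x.add (Finset.even_sum _ fun i _ => even_term i)
  have := extremalColoring_eq_one_of_even even_z (by omega : 2 * ∑ i, a i + 2 ≤ _)
  simp [hχz] at this

/-- Corollary 3.2, case `∑ bᵢ = 1`: the off-diagonal Rado number of
`x + a₁y₁ + ⋯ + a_k y_k = z` and `x + y = z` is
`2Q + 2⌊(Q+1)/2⌋ + 1` where `Q = a₁ + ⋯ + a_k`. -/
theorem off_diagonal_rado_corollary_s_eq_one (k ℓ : ℕ) (hk : 1 ≤ k) (hl : 1 ≤ ℓ)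
    (a : Fin k → ℕ) (b : Fin ℓ → ℕ)
    (ha : ∀ i, 0 < a i) (hb : ∀ i, 0 < b i)
    (hab : (∑ i, b i) ≤ ∑ i, a i) (hb1 : (∑ i, b i) = 1) :
    IsLeast {N : ℕ | 0 < N ∧ ∀ χ : ℕ → Fin 2,
      (∃ (x : ℕ) (y : Fin k → ℕ) (z : ℕ),
        x ∈ Finset.Icc 1 N ∧ (∀ i, y i ∈ Finset.Icc 1 N) ∧ z ∈ Finset.Icc 1 N ∧
        x + ∑ i, a i * y i = z ∧ χ x = 0 ∧ (∀ i, χ (y i) = 0) ∧ χ z = 0) ∨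
      (∃ x y z : ℕ, x ∈ Finset.Icc 1 N ∧ y ∈ Finset.Icc 1 N ∧
        z ∈ Finset.Icc 1 N ∧ x + y = z ∧ χ x = 1 ∧ χ y = 1 ∧ χ z = 1)}
      (2 * (∑ i, a i) + 2 * (((∑ i, a i) + 1) / 2) + 1) := by
  have hQ : 0 < ∑ i, a i := by omega
  simp only [exists_solution_iff_not_solutionFree, exists_sum_iff_not_sumFree, ← not_and_or]
  refine ⟨⟨by omega, fun χ hχ => ?_⟩, fun N hN => ?_⟩
  · exact (lt_of_solutionFree_of_sumFree hQ hχ.1 hχ.2).false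
  · by_contra! hlt
    exact hN.2 (extremalColoring (∑ i, a i))
      ⟨solutionFree_colorClass_extremalColoring hQ (by omega),
        sumFree_colorClass_extremalColoring (by omega)⟩
end
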